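/- Let k ≥ 3 be an integer, let γ₁,…,γ_k be real numbers, and let ψ be an approximation function with ∑_q (ψ(q))^k = ∞. Then the set of points (x₁,…,x_k) ∈ [0,1]^k such that max_{1 ≤ i ≤ k} ‖q x_i − γ_i‖ ≤ ψ(q) for infinitely many positive integers q has k-dimensional Lebesgue measure one. -/

import Mathlib

open MeasureTheory Filter Real

/-- Distance from a real number to the nearest integer. -/
noncomputable def dnint (x : ℝ) : ℝ := |x - round x|

/-!
Reduced modulo one, the points to be counted are those lying in infinitely many of the sets
`A_q = {x ∈ (ℝ/ℤ)ᵏ | ‖q xᵢ - cᵢ‖ ≤ ψ q for all i}`, so by the second-moment Borel–Cantelli lemma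
it is enough that the `A_q` are pairwise independent on average. In dimension one, `A_q` is
invariant under the `q`-torsion points; when `q` and `r` are coprime these are permuted by
multiplication by `r`, so every translate of the torsion group has at most
`q * μ(A_r) + 1` points in `A_r`, and averaging yields `μ(A_q ∩ A_r) ≤ μ(A_q) (μ(A_r) + 1 / q)`.
Dividing out a common factor, which preserves measure, gives in general
`μ(A_q ∩ A_r) ≤ μ(A_q) (μ(A_r) + gcd(q, r) / q)`. In dimension `k` both sides are raised to the
power `k`, and the error `(gcd(q, r) / q) ^ k` summed over `r ≤ q` is
`∑ φ(d) / d ^ k` over the divisors `d` of `q`, which is bounded since `k ≥ 3`.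
-/

open Finset (Icc range)
open Metric (closedBall)
open scoped Finset Nat

section BorelCantelli

variable {Ω α : Type*}

/-- The number of indices `i ∈ s` with `x ∈ A i`. It is real-valued, being used as a random
variable whose first two moments are computed. -/
noncomputable def hitCount (A : α → Set Ω) (s : Finset α) (x : Ω) : ℝ :=
  ∑ i ∈ s, (A i).indicator 1 x

lemma hitCount_le_ncard {A : α → Set Ω} {x : Ω} (h : {i | x ∈ A i}.Finite) (s : Finset α) :
    hitCount A s x ≤ {i | x ∈ A i}.ncard := by
  classical
  have hcard : hitCount A s x = #{i ∈ s | x ∈ A i} := by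
    simp [hitCount, Set.indicator_apply]
  rw [hcard, Nat.cast_le, ← Set.ncard_coe_finset]
  exact Set.ncard_le_ncard (fun i hi ↦ by simp_all) h

variable [MeasurableSpace Ω] {μ : Measure Ω} {A : α → Set Ω}

lemma memLp_hitCount [IsFiniteMeasure μ] (hA : ∀ i, MeasurableSet (A i)) (s : Finset α)
    (p : ENNReal) : MemLp (hitCount A s) p μ :=
  memLp_finsetSum s fun i _ ↦ (memLp_const (1 : ℝ)).indicator (hA i)

lemma integral_hitCount [IsFiniteMeasure μ] (hA : ∀ i, MeasurableSet (A i)) (s : Finset α) :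
    ∫ x, hitCount A s x ∂μ = ∑ i ∈ s, μ.real (A i) := by
  have hint (i : α) : Integrable ((A i).indicator (1 : Ω → ℝ)) μ :=
    (integrable_const (1 : ℝ)).indicator (hA i)
  simp only [hitCount, integral_finsetSum _ fun i _ ↦ hint i, integral_indicator_one (hA _)]

lemma integral_hitCount_sq [IsFiniteMeasure μ] (hA : ∀ i, MeasurableSet (A i)) (s : Finset α) :
    ∫ x, hitCount A s x ^ 2 ∂μ = ∑ i ∈ s, ∑ j ∈ s, μ.real (A i ∩ A j) := by
  have hsq (x : Ω) : hitCount A s x ^ 2 = hitCount (fun p : α × α ↦ A p.1 ∩ A p.2) (s ×ˢ s) x := by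
    simp only [hitCount, sq, Finset.sum_mul_sum, Finset.sum_product, Set.inter_indicator_one,
      Pi.mul_apply]
  simp only [hsq]
  rw [integral_hitCount (A := fun p : α × α ↦ A p.1 ∩ A p.2) fun p ↦ (hA p.1).inter (hA p.2),
    Finset.sum_product]

lemma measureReal_hitCount_le_half_le [IsProbabilityMeasure μ] (hA : ∀ i, MeasurableSet (A i))
    {s : Finset α} (hs : 0 < ∑ i ∈ s, μ.real (A i)) {ε : ℝ}
    (hε : ∑ i ∈ s, ∑ j ∈ s, μ.real (A i ∩ A j) ≤ (1 + ε) * (∑ i ∈ s, μ.real (A i)) ^ 2) :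
    μ.real {x | hitCount A s x ≤ (∑ i ∈ s, μ.real (A i)) / 2} ≤ 4 * ε := by
  set S := ∑ i ∈ s, μ.real (A i)
  have hmean : ∫ x, hitCount A s x ∂μ = S := integral_hitCount hA s
  have hvar : ProbabilityTheory.variance (hitCount A s) μ ≤ ε * S ^ 2 := by
    rw [ProbabilityTheory.variance_eq_sub (memLp_hitCount hA s 2), hmean]
    simp only [Pi.pow_apply]
    rw [integral_hitCount_sq hA]
    linarith
  have hsub : {x | hitCount A s x ≤ S / 2} ⊆ {x | S / 2 ≤ |hitCount A s x - S|} := by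
    intro x hx
    simp only [Set.mem_ofPred_eq] at hx ⊢
    linarith [neg_abs_le (hitCount A s x - S)]
  have hcheb := ProbabilityTheory.meas_ge_le_variance_div_sq (memLp_hitCount (μ := μ) hA s 2)
    (half_pos hs)
  rw [hmean] at hcheb
  calc μ.real {x | hitCount A s x ≤ S / 2}
      ≤ μ.real {x | S / 2 ≤ |hitCount A s x - S|} := measureReal_mono hsub
    _ ≤ ProbabilityTheory.variance (hitCount A s) μ / (S / 2) ^ 2 :=
      ENNReal.toReal_le_of_le_ofReal
        (div_nonneg (ProbabilityTheory.variance_nonneg _ _) (sq_nonneg _)) hcheb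
    _ ≤ 4 * ε := by
      rw [div_le_iff₀ (by positivity)]
      linarith

theorem ae_infinite_setOf_mem_of_sum_measureReal_inter_le [IsProbabilityMeasure μ]
    (hA : ∀ i, MeasurableSet (A i)) {β : Type*} {l : Filter β} [l.NeBot] {s : β → Finset α}
    (hdiv : Tendsto (fun b ↦ ∑ i ∈ s b, μ.real (A i)) l atTop)
    (hinter : ∀ ε > 0, ∀ᶠ b in l, ∑ i ∈ s b, ∑ j ∈ s b, μ.real (A i ∩ A j) ≤
      (1 + ε) * (∑ i ∈ s b, μ.real (A i)) ^ 2) :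
    ∀ᵐ x ∂μ, {i | x ∈ A i}.Infinite := by
  have hbdd (M : ℕ) : μ {x | ∀ b, hitCount A (s b) x ≤ M} = 0 := by
    rw [← measureReal_eq_zero_iff]
    refine le_antisymm (le_of_forall_pos_le_add fun ε hε ↦ ?_) measureReal_nonneg
    obtain ⟨b, hb, hSb⟩ := ((hinter (ε / 4) (by positivity)).and
      (hdiv.eventually_ge_atTop (2 * M + 1))).exists
    calc μ.real {x | ∀ b, hitCount A (s b) x ≤ M}
        ≤ μ.real {x | hitCount A (s b) x ≤ (∑ i ∈ s b, μ.real (A i)) / 2} :=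
          measureReal_mono fun x hx ↦ (hx b).trans (by linarith)
      _ ≤ 4 * (ε / 4) :=
          measureReal_hitCount_le_half_le hA (by linarith [M.cast_nonneg (α := ℝ)]) hb
      _ = 0 + ε := by ring
  filter_upwards [ae_all_iff.2 fun M ↦ measure_eq_zero_iff_ae_notMem.1 (hbdd M)] with x hx hfin
  exact hx _ fun b ↦ hitCount_le_ncard hfin (s b)

end BorelCantelli

section RealInequalities

lemma exists_add_pow_le (k : ℕ) {ε : ℝ} (hε : 0 < ε) : ∃ C, 0 ≤ C ∧ ∀ a b : ℝ, 0 ≤ a → 0 ≤ b →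
    (a + b) ^ k ≤ (1 + ε) * a ^ k + C * b ^ k := by
  obtain ⟨η, hηε, hη⟩ : ∃ η : ℝ, (1 + η) ^ k < 1 + ε ∧ 0 < η := by
    have hlim : Tendsto (fun η : ℝ ↦ (1 + η) ^ k) (nhdsWithin 0 (Set.Ioi 0)) (nhds 1) :=
      (Continuous.tendsto' (by fun_prop) 0 1 (by simp)).mono_left nhdsWithin_le_nhds
    exact ((hlim.eventually_lt_const (by linarith)).and self_mem_nhdsWithin).exists
  refine ⟨(1 / η + 1) ^ k, by positivity, fun a b ha hb ↦ ?_⟩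
  rcases le_total b (η * a) with hab | hab
  · calc (a + b) ^ k ≤ ((1 + η) * a) ^ k := by gcongr; linarith
      _ = (1 + η) ^ k * a ^ k := mul_pow _ _ _
      _ ≤ (1 + ε) * a ^ k := by gcongr
      _ ≤ (1 + ε) * a ^ k + (1 / η + 1) ^ k * b ^ k := le_add_of_nonneg_right (by positivity)
  · have ha' : a ≤ 1 / η * b := by
      rw [one_div, ← div_eq_inv_mul, le_div_iff₀ hη]
      linarith
    calc (a + b) ^ k ≤ ((1 / η + 1) * b) ^ k := by gcongr; linarith
      _ = (1 / η + 1) ^ k * b ^ k := mul_pow _ _ _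
      _ ≤ (1 + ε) * a ^ k + (1 / η + 1) ^ k * b ^ k := le_add_of_nonneg_left (by positivity)

lemma min_one_pow {x : ℝ} (hx : 0 ≤ x) (k : ℕ) : min 1 x ^ k = min 1 (x ^ k) := by
  rcases le_total 1 x with h | h
  · simp [h, one_le_pow₀ h]
  · simp [h, pow_le_one₀ hx h]

lemma summable_of_summable_min {α : Type*} {f : α → ℝ} {c : ℝ} (hc : 0 < c)
    (h : Summable fun i ↦ min c (f i)) : Summable f := by
  refine (summable_congr_cofinite ?_).1 h
  filter_upwards [h.tendsto_cofinite_zero.eventually_lt_const hc] with i hi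
  exact min_eq_right ((min_lt_iff.1 hi).resolve_left (lt_irrefl c)).le

lemma tendsto_sum_Icc_one_atTop_iff {f : ℕ → ℝ} (hf : ∀ n, 0 ≤ f n) :
    Tendsto (fun N ↦ ∑ n ∈ Icc 1 N, f n) atTop atTop ↔ ¬ Summable f := by
  rw [← summable_nat_add_iff 1, not_summable_iff_tendsto_nat_atTop_of_nonneg fun n ↦ hf _]
  simp only [← Finset.Ico_add_one_right_eq_Icc, Finset.sum_Ico_eq_sum_range, add_tsub_cancel_right,
    add_comm 1]

lemma sum_Icc_sum_Icc_le_two_mul {E F : ℕ → ℕ → ℝ} (hE : ∀ m n, E m n = E n m)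
    (hF : ∀ m n, 0 ≤ F m n) (hEF : ∀ m n, 1 ≤ n → n ≤ m → E m n ≤ F m n) (N : ℕ) :
    ∑ m ∈ Icc 1 N, ∑ n ∈ Icc 1 N, E m n ≤ 2 * ∑ m ∈ Icc 1 N, ∑ n ∈ Icc 1 m, F m n := by
  let G m n := if n ≤ m then F m n else 0
  have hG m n : 0 ≤ G m n := by
    simp only [G]
    split_ifs
    exacts [hF m n, le_rfl]
  have hEG : ∀ m ∈ Icc 1 N, ∀ n ∈ Icc 1 N, E m n ≤ G m n + G n m := by
    intro m hm n hn
    rcases le_total n m with h | h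
    · have := hEF m n (Finset.mem_Icc.1 hn).1 h
      have := hG n m
      simp only [G, if_pos h] at *
      linarith
    · have := hEF n m (Finset.mem_Icc.1 hm).1 h
      have := hG m n
      have := hE m n
      simp only [G, if_pos h] at *
      linarith
  have hsumG : ∑ m ∈ Icc 1 N, ∑ n ∈ Icc 1 N, G m n = ∑ m ∈ Icc 1 N, ∑ n ∈ Icc 1 m, F m n := by
    refine Finset.sum_congr rfl fun m hm ↦ ?_
    rw [← Finset.sum_filter]
    congr 1
    ext n
    simp only [Finset.mem_filter, Finset.mem_Icc] at hm ⊢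
    lia
  calc ∑ m ∈ Icc 1 N, ∑ n ∈ Icc 1 N, E m n
      ≤ ∑ m ∈ Icc 1 N, ∑ n ∈ Icc 1 N, (G m n + G n m) :=
        Finset.sum_le_sum fun m hm ↦ Finset.sum_le_sum fun n hn ↦ hEG m hm n hn
    _ = 2 * ∑ m ∈ Icc 1 N, ∑ n ∈ Icc 1 m, F m n := by
      simp only [Finset.sum_add_distrib]
      rw [Finset.sum_comm (f := fun m n ↦ G n m), hsumG, two_mul]

end RealInequalities

section Gcd

lemma sum_Icc_one_gcd_eq_sum_divisors {M : Type*} [AddCommMonoid M] (n : ℕ) (f : ℕ → M) :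
    ∑ r ∈ Icc 1 n, f (n.gcd r) = ∑ d ∈ n.divisors, φ d • f (n / d) := by
  rcases n.eq_zero_or_pos with rfl | hn
  · simp
  calc ∑ r ∈ Icc 1 n, f (n.gcd r) = ∑ r ∈ range n, f (n.gcd r) := by
        rw [← Finset.Ico_add_one_right_eq_Icc, Finset.sum_Ico_succ_top hn, Finset.range_eq_Ico,
          Finset.sum_eq_sum_Ico_succ_bot hn, Nat.gcd_self, Nat.gcd_zero_right, add_comm]
    _ = ∑ d ∈ n.divisors, ∑ r ∈ range n with n.gcd r = d, f (n.gcd r) :=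
        (Finset.sum_fiberwise_of_maps_to
          (fun r _ ↦ Nat.mem_divisors.2 ⟨Nat.gcd_dvd_left n r, hn.ne'⟩) _).symm
    _ = ∑ d ∈ n.divisors, φ (n / d) • f d := by
        refine Finset.sum_congr rfl fun d hd ↦ ?_
        rw [Nat.totient_div_of_dvd (Nat.dvd_of_mem_divisors hd), ← Finset.sum_const]
        exact Finset.sum_congr rfl fun r hr ↦ by rw [(Finset.mem_filter.1 hr).2]
    _ = ∑ d ∈ n.divisors, φ d • f (n / d) := by
        rw [← Nat.sum_div_divisors]
        refine Finset.sum_congr rfl fun d hd ↦ ?_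
        rw [Nat.div_div_self (Nat.dvd_of_mem_divisors hd) hn.ne']

lemma sum_Icc_one_gcd_div_pow_le (n : ℕ) {k : ℕ} (hk : 3 ≤ k) :
    ∑ r ∈ Icc 1 n, ((n.gcd r : ℝ) / n) ^ k ≤ ∑' d : ℕ, 1 / (d : ℝ) ^ 2 := by
  rw [sum_Icc_one_gcd_eq_sum_divisors n fun d ↦ ((d : ℝ) / n) ^ k]
  refine (Finset.sum_le_sum fun d hd ↦ ?_).trans
    ((summable_one_div_nat_pow.2 one_lt_two).sum_le_tsum n.divisors fun _ _ ↦ by positivity)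
  obtain ⟨hdn, hn⟩ := Nat.mem_divisors.1 hd
  have hd1 : (1 : ℝ) ≤ d := by exact_mod_cast Nat.pos_of_mem_divisors hd
  have hn0 : (n : ℝ) ≠ 0 := Nat.cast_ne_zero.2 hn
  calc φ d • (((n / d : ℕ) : ℝ) / n) ^ k = φ d * (1 / d) ^ k := by
        rw [nsmul_eq_mul, Nat.cast_div hdn (by positivity), div_right_comm, div_self hn0]
    _ ≤ d * (1 / d) ^ 3 := by
        gcongr ?_ * ?_
        · exact_mod_cast d.totient_le
        · exact pow_le_pow_of_le_one (by positivity) (div_le_one_of_le₀ hd1 (by positivity)) hk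
    _ = 1 / (d : ℝ) ^ 2 := by field_simp

end Gcd

section Averaging

lemma card_mul_measure_inter_le {G α : Type*} [MeasurableSpace G] [AddGroup G] [MeasurableAdd G]
    {μ : Measure G} [μ.IsAddRightInvariant] [Fintype α] {t : α → G} {A B : Set G}
    (hA : ∀ i x, x + t i ∈ A ↔ x ∈ A) (hB : MeasurableSet B) {N : ENNReal}
    (hN : ∀ x, ({i | x + t i ∈ B}.ncard : ENNReal) ≤ N) :
    Fintype.card α * μ (A ∩ B) ≤ N * μ A := by
  classical
  have hBt (i : α) : MeasurableSet ((· + t i) ⁻¹' B) := measurable_add_const (t i) hB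
  have htrans (i : α) : μ (A ∩ B) = ∫⁻ x in A, ((· + t i) ⁻¹' B).indicator 1 x ∂μ := by
    have hpre : (· + t i) ⁻¹' (A ∩ B) = (· + t i) ⁻¹' B ∩ A := by
      ext x
      simp [hA, and_comm]
    rw [lintegral_indicator_one (hBt i), Measure.restrict_apply (hBt i), ← hpre,
      measure_preimage_add_right]
  calc Fintype.card α * μ (A ∩ B)
      = ∑ i, ∫⁻ x in A, ((· + t i) ⁻¹' B).indicator 1 x ∂μ := by simp [← htrans]
    _ = ∫⁻ x in A, ∑ i, ((· + t i) ⁻¹' B).indicator 1 x ∂μ :=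
      (lintegral_finsetSum _ fun i _ ↦ measurable_one.indicator (hBt i)).symm
    _ ≤ ∫⁻ _ in A, N ∂μ := by
      refine lintegral_mono fun x ↦ le_trans (le_of_eq ?_) (hN x)
      simp [Set.indicator_apply, Set.ncard_eq_toFinset_card']
    _ = N * μ A := by simp

end Averaging

section ApproxSet

/-- The set of points `x` for which `q • x` lies within distance `a` of `c`. On the torus
`ι → ℝ / ℤ` with its supremum metric this is the set of solutions of
`max ‖q xᵢ - cᵢ‖ ≤ a`. -/
def approxSet {X : Type*} [PseudoMetricSpace X] [AddMonoid X] (q : ℕ) (c : X) (a : ℝ) : Set X :=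
  (q • ·) ⁻¹' closedBall c a

lemma measurableSet_approxSet {X : Type*} [PseudoMetricSpace X] [AddMonoid X] [ContinuousAdd X]
    [MeasurableSpace X] [OpensMeasurableSpace X] (q : ℕ) (c : X) (a : ℝ) :
    MeasurableSet (approxSet q c a) :=
  (Metric.isClosed_closedBall.preimage (continuous_nsmul q)).measurableSet

lemma approxSet_pi {ι : Type*} [Fintype ι] {X : ι → Type*} [∀ i, PseudoMetricSpace (X i)]
    [∀ i, AddMonoid (X i)] (q : ℕ) (c : ∀ i, X i) {a : ℝ} (ha : 0 ≤ a) :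
    approxSet q c a = Set.univ.pi fun i ↦ approxSet q (c i) a := by
  rw [approxSet, closedBall_pi c ha]
  rfl

end ApproxSet

section Circle

lemma measurePreserving_nsmul_unitAddCircle {n : ℕ} (hn : n ≠ 0) :
    MeasurePreserving (fun x : UnitAddCircle ↦ n • x) := by
  simpa using Measure.measurePreserving_zsmul (volume : Measure UnitAddCircle)
    (Nat.cast_ne_zero.2 hn : (n : ℤ) ≠ 0)

lemma measureReal_approxSet {q : ℕ} (hq : q ≠ 0) (c : UnitAddCircle) {a : ℝ} (ha : 0 ≤ a) :
    volume.real (approxSet q c a) = min 1 (2 * a) := by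
  rw [measureReal_def, approxSet, (measurePreserving_nsmul_unitAddCircle hq).measure_preimage
    measurableSet_closedBall.nullMeasurableSet, AddCircle.volume_closedBall,
    ENNReal.toReal_ofReal (by positivity)]

lemma measureReal_approxSet_mul_inter {d : ℕ} (hd : d ≠ 0) (q r : ℕ) (c c' : UnitAddCircle)
    (a b : ℝ) : volume.real (approxSet (d * q) c a ∩ approxSet (d * r) c' b) =
      volume.real (approxSet q c a ∩ approxSet r c' b) := by
  have hpre : approxSet (d * q) c a ∩ approxSet (d * r) c' b =
      (d • ·) ⁻¹' (approxSet q c a ∩ approxSet r c' b) := by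
    simp only [approxSet, mul_nsmul, Set.preimage_inter]
    rfl
  rw [hpre, measureReal_def, (measurePreserving_nsmul_unitAddCircle hd).measure_preimage
    ((measurableSet_approxSet q c a).inter (measurableSet_approxSet r c' b)).nullMeasurableSet,
    measureReal_def]

lemma card_Icc_ceil_floor_le {x y : ℝ} (h : x ≤ y + 1) : (#(Icc ⌈x⌉ ⌊y⌋) : ℝ) ≤ y - x + 1 := by
  have hcard : (#(Icc ⌈x⌉ ⌊y⌋) : ℝ) = max ((⌊y⌋ + 1 - ⌈x⌉ : ℤ) : ℝ) 0 := by
    rw [Int.card_Icc, ← Int.cast_natCast, Int.toNat_eq_max, Int.cast_max, Int.cast_zero]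
  rw [hcard]
  push_cast
  exact max_le (by linarith [Int.floor_le y, Int.le_ceil x]) (by linarith)

lemma ncard_add_toAddCircle_mem_closedBall_le (q : ℕ) [NeZero q] (y c : UnitAddCircle) {b : ℝ}
    (hb : 0 ≤ b) : ({j : ZMod q | y + ZMod.toAddCircle j ∈ closedBall c b}.ncard : ℝ) ≤
      q * min 1 (2 * b) + 1 := by
  obtain ⟨t, ht⟩ := QuotientAddGroup.mk_surjective (y - c)
  have hq : (0 : ℝ) < q := Nat.cast_pos.2 (NeZero.pos q)
  set S : Set (ZMod q) := {j | y + ZMod.toAddCircle j ∈ closedBall c b}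
  have hS (j : ZMod q) (hj : j ∈ S) : |t + j.val / q - round (t + j.val / q)| ≤ b := by
    have hcoe : y + ZMod.toAddCircle j - c = ((t + j.val / q : ℝ) : UnitAddCircle) := by
      rw [add_sub_right_comm, ← ht, ZMod.toAddCircle_apply]
      rfl
    rwa [← UnitAddCircle.norm_eq, ← hcoe, ← mem_closedBall_iff_norm]
  have hsub : S ⊆ (Icc ⌈-(q * t) - q * b⌉ ⌊-(q * t) + q * b⌋).image ((↑) : ℤ → ZMod q) := by
    intro j hj
    obtain ⟨hlo, hhi⟩ := abs_le.1 (hS j hj)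
    set n := round (t + j.val / q)
    have hscale : q * (t + j.val / q - n) = q * t + (j.val - q * n) := by field_simp; ring
    simp only [Finset.coe_image, Set.mem_image, Finset.coe_Icc, Set.mem_Icc, Int.ceil_le,
      Int.le_floor]
    refine ⟨j.val - q * n, ⟨?_, ?_⟩, by simp⟩ <;> push_cast
    · linarith [mul_le_mul_of_nonneg_left hlo hq.le]
    · linarith [mul_le_mul_of_nonneg_left hhi hq.le]
  have hinterval : (S.ncard : ℝ) ≤ q * (2 * b) + 1 :=
    calc (S.ncard : ℝ) ≤ #(Icc ⌈-(q * t) - q * b⌉ ⌊-(q * t) + q * b⌋) := by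
          rw [Nat.cast_le]
          refine (Set.ncard_le_ncard hsub (Finset.finite_toSet _)).trans ?_
          rw [Set.ncard_coe_finset]
          exact Finset.card_image_le
      _ ≤ -(q * t) + q * b - (-(q * t) - q * b) + 1 :=
          card_Icc_ceil_floor_le (by linarith [mul_nonneg hq.le hb])
      _ = q * (2 * b) + 1 := by ring
  have huniv : (S.ncard : ℝ) ≤ q := by
    rw [Nat.cast_le]
    simpa using Set.ncard_le_card S
  rw [mul_min_of_nonneg _ _ hq.le, ← min_add_add_right]
  exact le_min (by linarith) hinterval

lemma ncard_add_toAddCircle_mem_approxSet_le {q r : ℕ} [NeZero q] (hqr : q.Coprime r)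
    (x c : UnitAddCircle) {b : ℝ} (hb : 0 ≤ b) :
    ({j : ZMod q | x + ZMod.toAddCircle j ∈ approxSet r c b}.ncard : ℝ) ≤
      q * min 1 (2 * b) + 1 := by
  refine le_trans (Nat.cast_le.2 ?_)
    (ncard_add_toAddCircle_mem_closedBall_le q (r • x) c hb)
  refine Set.ncard_le_ncard_of_injOn (fun j ↦ r • j) (fun j hj ↦ ?_) (fun i _ j _ hij ↦ ?_)
  · have hmap : ZMod.toAddCircle (r • j) = r • ZMod.toAddCircle j := map_nsmul _ _ _
    rwa [Set.mem_ofPred_eq, hmap, ← smul_add]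
  · exact ((ZMod.isUnit_iff_coprime r q).2 hqr.symm).mul_right_injective (by simpa using hij)

lemma measureReal_approxSet_inter_le_of_coprime {q r : ℕ} (hq : q ≠ 0) (hqr : q.Coprime r)
    (c c' : UnitAddCircle) {a b : ℝ} (ha : 0 ≤ a) (hb : 0 ≤ b) :
    volume.real (approxSet q c a ∩ approxSet r c' b) ≤
      min 1 (2 * a) * (min 1 (2 * b) + 1 / q) := by
  have : NeZero q := ⟨hq⟩
  have hq0 : (0 : ℝ) < q := by positivity
  have hperiodic (j : ZMod q) (x : UnitAddCircle) :
      x + ZMod.toAddCircle j ∈ approxSet q c a ↔ x ∈ approxSet q c a := by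
    have hj : q • ZMod.toAddCircle j = 0 := by rw [← map_nsmul]; simp
    simp [approxSet, hj]
  have hcount (x : UnitAddCircle) :
      ({j : ZMod q | x + ZMod.toAddCircle j ∈ approxSet r c' b}.ncard : ENNReal) ≤
        ENNReal.ofReal (q * min 1 (2 * b) + 1) := by
    rw [← ENNReal.ofReal_natCast]
    exact ENNReal.ofReal_le_ofReal (ncard_add_toAddCircle_mem_approxSet_le hqr x c' hb)
  have havg : q * volume.real (approxSet q c a ∩ approxSet r c' b) ≤
      (q * min 1 (2 * b) + 1) * min 1 (2 * a) := by
    have := ENNReal.toReal_mono (by finiteness)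
      (card_mul_measure_inter_le (μ := volume) hperiodic (measurableSet_approxSet r c' b) hcount)
    rwa [ENNReal.toReal_mul, ENNReal.toReal_mul, ENNReal.toReal_ofReal (by positivity),
      ENNReal.toReal_natCast, ZMod.card, ← measureReal_def, ← measureReal_def,
      measureReal_approxSet hq c ha] at this
  rw [← mul_le_mul_iff_right₀ hq0]
  refine havg.trans_eq ?_
  field_simp

lemma measureReal_approxSet_inter_le {q : ℕ} (hq : q ≠ 0) (r : ℕ) (c c' : UnitAddCircle) {a b : ℝ}
    (ha : 0 ≤ a) (hb : 0 ≤ b) : volume.real (approxSet q c a ∩ approxSet r c' b) ≤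
      min 1 (2 * a) * (min 1 (2 * b) + q.gcd r / q) := by
  obtain ⟨q', r', hcop, hq', hr'⟩ := Nat.exists_coprime q r
  have hd : q.gcd r ≠ 0 := Nat.gcd_ne_zero_left hq
  set d := q.gcd r
  have hq'0 : q' ≠ 0 := by rintro rfl; simp_all
  rw [hq', hr', mul_comm q', mul_comm r', measureReal_approxSet_mul_inter hd]
  refine (measureReal_approxSet_inter_le_of_coprime hq'0 hcop c c' ha hb).trans_eq ?_
  push_cast
  rw [div_mul_cancel_left₀ (by positivity), one_div]

end Circle

section Torus

variable {ι : Type*} [Fintype ι]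

lemma measureReal_approxSet_torus {q : ℕ} (hq : q ≠ 0) (c : UnitAddTorus ι) {a : ℝ}
    (ha : 0 ≤ a) : volume.real (approxSet q c a) = min 1 (2 * a) ^ Fintype.card ι := by
  rw [approxSet_pi q c ha, measureReal_def, volume_pi_pi, ENNReal.toReal_prod]
  simp [← measureReal_def, measureReal_approxSet hq _ ha]

lemma measureReal_approxSet_torus_inter_le {q : ℕ} (hq : q ≠ 0) (r : ℕ) (c c' : UnitAddTorus ι)
    {a b : ℝ} (ha : 0 ≤ a) (hb : 0 ≤ b) :
    volume.real (approxSet q c a ∩ approxSet r c' b) ≤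
      (min 1 (2 * a) * (min 1 (2 * b) + q.gcd r / q)) ^ Fintype.card ι := by
  rw [approxSet_pi q c ha, approxSet_pi r c' hb, ← Set.pi_inter_distrib, measureReal_def,
    volume_pi_pi, ENNReal.toReal_prod]
  refine (Finset.prod_le_prod (fun _ _ ↦ ENNReal.toReal_nonneg) fun i _ ↦
    measureReal_approxSet_inter_le hq r (c i) (c' i) ha hb).trans_eq ?_
  simp

lemma measureReal_approxSet_torus_inter_sub_le {ε C : ℝ}
    (hC : ∀ u v : ℝ, 0 ≤ u → 0 ≤ v →
      (u + v) ^ Fintype.card ι ≤ (1 + ε) * u ^ Fintype.card ι + C * v ^ Fintype.card ι)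
    {q r : ℕ} (hq : q ≠ 0) (hr : r ≠ 0) (c c' : UnitAddTorus ι) {a b : ℝ} (ha : 0 ≤ a)
    (hb : 0 ≤ b) :
    volume.real (approxSet q c a ∩ approxSet r c' b) -
        (1 + ε) * (volume.real (approxSet q c a) * volume.real (approxSet r c' b)) ≤
      C * volume.real (approxSet q c a) * ((q.gcd r : ℝ) / q) ^ Fintype.card ι := by
  have hinter := measureReal_approxSet_torus_inter_le hq r c c' ha hb
  have hsplit := mul_le_mul_of_nonneg_left
    (hC (min 1 (2 * b)) ((q.gcd r : ℝ) / q) (by positivity) (by positivity))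
    (by positivity : 0 ≤ min 1 (2 * a) ^ Fintype.card ι)
  rw [mul_pow] at hinter
  rw [measureReal_approxSet_torus hq c ha, measureReal_approxSet_torus hr c' hb]
  linarith

lemma exists_sum_measureReal_approxSet_inter_le (hι : 3 ≤ Fintype.card ι)
    (c : ℕ → UnitAddTorus ι) {ψ : ℕ → ℝ} (hψ : ∀ q, 0 ≤ ψ q) {ε : ℝ} (hε : 0 < ε) :
    ∃ C, ∀ Q, ∑ q ∈ Icc 1 Q, ∑ r ∈ Icc 1 Q,
        volume.real (approxSet q (c q) (ψ q) ∩ approxSet r (c r) (ψ r)) ≤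
      (1 + ε) * (∑ q ∈ Icc 1 Q, volume.real (approxSet q (c q) (ψ q))) ^ 2 +
        C * ∑ q ∈ Icc 1 Q, volume.real (approxSet q (c q) (ψ q)) := by
  obtain ⟨C, hC, hpow⟩ := exists_add_pow_le (Fintype.card ι) hε
  set A : ℕ → Set (UnitAddTorus ι) := fun q ↦ approxSet q (c q) (ψ q)
  let E q r := volume.real (A q ∩ A r) - (1 + ε) * (volume.real (A q) * volume.real (A r))
  let F q r := C * volume.real (A q) * ((q.gcd r : ℝ) / q) ^ Fintype.card ι
  have hE_symm (q r : ℕ) : E q r = E r q := by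
    simp only [E]
    rw [Set.inter_comm, mul_comm (volume.real (A q))]
  have hF_nonneg (q r : ℕ) : 0 ≤ F q r := by positivity
  have hEF (q r : ℕ) (hr : 1 ≤ r) (hrq : r ≤ q) : E q r ≤ F q r :=
    measureReal_approxSet_torus_inter_sub_le hpow (by lia) (by lia) _ _ (hψ q) (hψ r)
  refine ⟨2 * C * ∑' n : ℕ, 1 / (n : ℝ) ^ 2, fun Q ↦ ?_⟩
  have hE_sum : ∑ q ∈ Icc 1 Q, ∑ r ∈ Icc 1 Q, E q r =
      ∑ q ∈ Icc 1 Q, ∑ r ∈ Icc 1 Q, volume.real (A q ∩ A r) -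
        (1 + ε) * (∑ q ∈ Icc 1 Q, volume.real (A q)) ^ 2 := by
    simp only [E, Finset.sum_sub_distrib, ← Finset.mul_sum, ← Finset.sum_mul, sq]
  have hF_sum : ∑ q ∈ Icc 1 Q, ∑ r ∈ Icc 1 q, F q r ≤
      C * (∑' n : ℕ, 1 / (n : ℝ) ^ 2) * ∑ q ∈ Icc 1 Q, volume.real (A q) := by
    rw [Finset.mul_sum]
    refine Finset.sum_le_sum fun q _ ↦ ?_
    rw [← Finset.mul_sum, mul_right_comm]
    gcongr
    exact sum_Icc_one_gcd_div_pow_le q hι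
  linarith [sum_Icc_sum_Icc_le_two_mul hE_symm hF_nonneg hEF Q]

lemma tendsto_sum_measureReal_approxSet_torus (c : ℕ → UnitAddTorus ι) {ψ : ℕ → ℝ}
    (hψ : ∀ q, 0 ≤ ψ q) (hdiv : ¬ Summable fun q ↦ ψ q ^ Fintype.card ι) :
    Tendsto (fun Q ↦ ∑ q ∈ Icc 1 Q, volume.real (approxSet q (c q) (ψ q))) atTop atTop := by
  have hmeasure (q : ℕ) (hq : q ≠ 0) : volume.real (approxSet q (c q) (ψ q)) =
      min 1 (2 ^ Fintype.card ι * ψ q ^ Fintype.card ι) := by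
    rw [measureReal_approxSet_torus hq _ (hψ q), min_one_pow (by linarith [hψ q]), mul_pow]
  rw [tendsto_sum_Icc_one_atTop_iff fun _ ↦ measureReal_nonneg]
  refine fun h ↦ hdiv ?_
  have hmin : Summable fun q ↦ min 1 (2 ^ Fintype.card ι * ψ q ^ Fintype.card ι) :=
    h.congr_cofinite <| by
      filter_upwards [eventually_cofinite_ne 0] with q hq using hmeasure q hq
  exact (summable_mul_left_iff (by positivity)).1 (summable_of_summable_min one_pos hmin)

theorem ae_infinite_setOf_mem_approxSet (hι : 3 ≤ Fintype.card ι) (c : ℕ → UnitAddTorus ι)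
    {ψ : ℕ → ℝ} (hψ : ∀ q, 0 ≤ ψ q) (hdiv : ¬ Summable fun q ↦ ψ q ^ Fintype.card ι) :
    ∀ᵐ x, {q | x ∈ approxSet q (c q) (ψ q)}.Infinite := by
  have : IsProbabilityMeasure (volume : Measure (UnitAddTorus ι)) := ⟨by
    rw [← Set.pi_univ, volume_pi_pi]
    simp⟩
  have hS := tendsto_sum_measureReal_approxSet_torus c hψ hdiv
  refine ae_infinite_setOf_mem_of_sum_measureReal_inter_le
    (fun q ↦ measurableSet_approxSet q (c q) (ψ q)) hS fun ε hε ↦ ?_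
  obtain ⟨C, hC⟩ := exists_sum_measureReal_approxSet_inter_le hι c hψ (half_pos hε)
  filter_upwards [hS.eventually_ge_atTop 0, hS.eventually_ge_atTop (C / (ε / 2))] with Q hQ0 hQ
  rw [div_le_iff₀ (half_pos hε)] at hQ
  linarith [hC Q, mul_le_mul_of_nonneg_right hQ hQ0]

lemma measurePreserving_coe_unitAddTorus :
    MeasurePreserving (fun (x : ι → ℝ) i ↦ (x i : UnitAddCircle))
      (volume.restrict (Set.univ.pi fun _ ↦ Set.Ioc (0 : ℝ) 1)) := by
  have h := measurePreserving_pi (fun _ : ι ↦ volume.restrict (Set.Ioc (0 : ℝ) (0 + 1)))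
    (fun _ ↦ volume) fun _ ↦ UnitAddCircle.measurePreserving_mk 0
  rwa [zero_add, ← Measure.restrict_pi_pi] at h

lemma volume_setOf_mem_Icc_and_eq_one {p : (ι → ℝ) → Prop}
    (hp : ∀ᵐ x ∂volume.restrict (Set.univ.pi fun _ : ι ↦ Set.Ioc (0 : ℝ) 1), p x) :
    volume {x : ι → ℝ | (∀ i, x i ∈ Set.Icc (0 : ℝ) 1) ∧ p x} = 1 := by
  have hcube : {x : ι → ℝ | ∀ i, x i ∈ Set.Icc (0 : ℝ) 1} = Set.univ.pi fun _ ↦ Set.Icc 0 1 := by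
    ext x
    simp only [Set.mem_ofPred_eq, Set.mem_univ_pi]
  have hrestrict : volume.restrict (Set.univ.pi fun _ : ι ↦ Set.Ioc (0 : ℝ) 1) =
      volume.restrict {x | ∀ i, x i ∈ Set.Icc (0 : ℝ) 1} := by
    rw [hcube]
    exact Measure.restrict_congr_set (Measure.ae_eq_set_pi fun _ _ ↦ Ioc_ae_eq_Icc)
  rw [hrestrict] at hp
  have hmeas : MeasurableSet {x : ι → ℝ | ∀ i, x i ∈ Set.Icc (0 : ℝ) 1} := by
    rw [hcube]
    exact MeasurableSet.univ_pi fun _ ↦ measurableSet_Icc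
  calc volume {x : ι → ℝ | (∀ i, x i ∈ Set.Icc (0 : ℝ) 1) ∧ p x}
      = volume {x : ι → ℝ | ∀ i, x i ∈ Set.Icc (0 : ℝ) 1} := by
        refine measure_congr ?_
        filter_upwards [(ae_restrict_iff' hmeas).1 hp] with x hx
        exact propext ⟨fun h ↦ h.1, fun h ↦ ⟨h, hx h⟩⟩
    _ = 1 := by
        rw [hcube, volume_pi_pi]
        simp

end Torus

lemma coe_mem_approxSet_iff {ι : Type*} [Fintype ι] (q : ℕ) (x c : ι → ℝ) {a : ℝ} (ha : 0 ≤ a) :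
    (fun i ↦ (x i : UnitAddCircle)) ∈ approxSet q (fun i ↦ (c i : UnitAddCircle)) a ↔
      ∀ i, dnint (q * x i - c i) ≤ a := by
  rw [approxSet, Set.mem_preimage, Metric.mem_closedBall, dist_pi_le_iff ha]
  refine forall_congr' fun i ↦ ?_
  rw [dnint, ← UnitAddCircle.norm_eq, dist_eq_norm, AddCircle.coe_sub, ← nsmul_eq_mul,
    AddCircle.coe_nsmul]
  rfl

theorem stmt4_general {ι : Type*} [Fintype ι] (hι : 3 ≤ Fintype.card ι) (γ : ℕ → ι → ℝ)
    (ψ : ℕ → ℝ) (hψ0 : ∀ q, 0 ≤ ψ q)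
    (hdiv : Tendsto (fun Q : ℕ => ∑ q ∈ Finset.Icc 1 Q, (ψ q) ^ Fintype.card ι) atTop atTop) :
    volume {x : ι → ℝ | (∀ i, x i ∈ Set.Icc (0 : ℝ) 1) ∧
      {q : ℕ | 0 < q ∧ ∀ i, dnint (q * x i - γ q i) ≤ ψ q}.Infinite} = 1 := by
  rw [tendsto_sum_Icc_one_atTop_iff fun q ↦ pow_nonneg (hψ0 q) _] at hdiv
  refine volume_setOf_mem_Icc_and_eq_one ?_
  have htorus := ae_infinite_setOf_mem_approxSet hι (fun q i ↦ (γ q i : UnitAddCircle)) hψ0 hdiv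
  filter_upwards [measurePreserving_coe_unitAddTorus.quasiMeasurePreserving.ae htorus] with x hx
  simp only [coe_mem_approxSet_iff _ _ _ (hψ0 _)] at hx
  exact (hx.sdiff (Set.finite_singleton 0)).mono fun q hq ↦ ⟨Nat.pos_of_ne_zero hq.2, hq.1⟩

theorem stmt4 (k : ℕ) (hk : 3 ≤ k) (γ : Fin k → ℝ)
    (ψ : ℕ → ℝ) (hψ0 : ∀ q, 0 ≤ ψ q)
    (hdiv : Tendsto (fun Q : ℕ => ∑ q ∈ Finset.Icc 1 Q, (ψ q) ^ k) atTop atTop) :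
    volume {x : Fin k → ℝ | (∀ i, x i ∈ Set.Icc (0:ℝ) 1) ∧
      {q : ℕ | 0 < q ∧ ∀ i, dnint (q * x i - γ i) ≤ ψ q}.Infinite} = 1 := by
  refine stmt4_general ?_ (fun _ ↦ γ) ψ hψ0 ?_ <;> simpa
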